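/- In the Construction I setup with b = 1, the indexed family of blocks (B_{g,j}) for g ∈ P, 1 ≤ j ≤ q forms a tactical configuration on the rq-element point set P with parameters (v̄, b̄, k̄, r̄) = (rq, rq², r(q−1), rq(q−1)): there are rq² blocks (counted with multiplicity over the index pairs (g, j)), each block B_{g,j} is an r(q−1)-element subset of P, and every point of P belongs to exactly rq(q−1) of the blocks B_{g,j} (counted with multiplicity over the index pairs). -/

import Mathlib

/-!
A point `x` lies in `B_{g,j}` exactly when either `g ≠ x` is in the group of `x`, with `j`
arbitrary, or `g` is in another group and `x ∈ P_{hj}` for the group `G_h` of `x`. So it suffices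
that the sets `P_{h1}, P_{h2}, …` form a tactical configuration on each `G_h`: when they have size
`k` and replication number `s`, there are `(q - 1) m + (r - 1) q s` such pairs, `m` being the
number of indices `j`, and double counting in `G_h` gives `q s = m k`, so the count is `m` times
the block size `(q - 1) + (r - 1) k`. The `q` distinct `(q - 1)`-subsets of a group are all of its
`(q - 1)`-subsets, a complete design.
-/

open Finset

/-- The indexed family of blocks `B` is a tactical configuration with parameters `(v, b, k, r)` on
the point set `S`. Blocks may repeat: `b` and `r` count indices. -/
structure IsTacticalConfiguration {α β : Type*} [DecidableEq α] [Fintype β]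
    (S : Finset α) (B : β → Finset α) (v b k r : ℕ) : Prop where
  card_points : #S = v
  card_index : Fintype.card β = b
  block_subset : ∀ i, B i ⊆ S
  card_block : ∀ i, #(B i) = k
  card_filter_mem : ∀ x ∈ S, #{i | x ∈ B i} = r

theorem IsTacticalConfiguration.points_mul_replication {α β : Type*} [DecidableEq α] [Fintype β]
    {S : Finset α} {B : β → Finset α} {v b k r : ℕ} (h : IsTacticalConfiguration S B v b k r) :
    v * r = b * k := by
  rw [← h.card_points, ← h.card_index, ← card_univ]
  refine card_mul_eq_card_mul (fun x i => x ∈ B i) h.card_filter_mem fun i _ => ?_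
  rw [bipartiteBelow, filter_mem_eq_inter, inter_eq_right.2 (h.block_subset i), h.card_block]

/-- The complete design: a family listing each `k`-subset of `S` exactly once. -/
theorem isTacticalConfiguration_of_injective {α κ : Type*} [DecidableEq α] [Fintype κ]
    {S : Finset α} {P : κ → Finset α} {k : ℕ} (hk : 0 < k)
    (hsub : ∀ i, P i ⊆ S) (hcard : ∀ i, #(P i) = k) (hinj : Function.Injective P)
    (hκ : Fintype.card κ = (#S).choose k) :
    IsTacticalConfiguration S P #S (Fintype.card κ) k ((#S - 1).choose (k - 1)) where
  card_points := rfl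
  card_index := rfl
  block_subset := hsub
  card_block := hcard
  card_filter_mem x hx := by
    have himage : univ.image P = S.powersetCard k := by
      refine eq_of_subset_of_card_le
        (image_subset_iff.2 fun i _ => mem_powersetCard.2 ⟨hsub i, hcard i⟩) ?_
      rw [card_image_of_injective _ hinj, card_powersetCard, card_univ, hκ]
    have hcount := card_filter_powersetCard_subset {x} S k (singleton_subset_iff.2 hx)
      (by rwa [card_singleton])
    rw [← himage, filter_image, card_image_of_injective _ hinj] at hcount
    simpa only [singleton_subset_iff, card_singleton] using hcount

theorem isTacticalConfiguration_of_injective_card_sub_one {α κ : Type*} [DecidableEq α] [Fintype κ]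
    {S : Finset α} {P : κ → Finset α} {q : ℕ} (hq : 1 < q) (hS : #S = q)
    (hκ : Fintype.card κ = q) (hsub : ∀ i, P i ⊆ S) (hcard : ∀ i, #(P i) = q - 1)
    (hinj : Function.Injective P) :
    IsTacticalConfiguration S P q (Fintype.card κ) (q - 1) (q - 1) := by
  have hcomplete : Fintype.card κ = (#S).choose (q - 1) := by
    rw [hκ, hS, Nat.choose_symm hq.le, Nat.choose_one_right]
  have hrepl : (q - 1).choose (q - 1 - 1) = q - 1 := by
    rw [Nat.choose_symm (Nat.le_sub_one_of_lt hq), Nat.choose_one_right]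
  simpa only [hS, hrepl] using
    isTacticalConfiguration_of_injective (Nat.sub_pos_of_lt hq) hsub hcard hinj hcomplete

theorem mem_iff_of_disjoint {α ι : Type*} {G : ι → Finset α} {grp : α → ι}
    (hdisj : ∀ i j, i ≠ j → Disjoint (G i) (G j)) (hgrp : ∀ x, x ∈ G (grp x)) (x : α) (h : ι) :
    x ∈ G h ↔ grp x = h :=
  ⟨fun hx => by_contra fun hne => disjoint_left.1 (hdisj _ _ hne) (hgrp x) hx,
    fun hx => hx ▸ hgrp x⟩

theorem pairwise_disjoint_of_mem_iff {α ι : Type*} {G : ι → Finset α} {grp : α → ι}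
    (hG : ∀ x h, x ∈ G h ↔ grp x = h) : Pairwise (Function.onFun Disjoint G) := fun _ _ hne =>
  disjoint_left.2 fun x hx hx' => hne (((hG x _).1 hx).symm.trans ((hG x _).1 hx'))

theorem card_eq_mul_of_mem_iff {α ι : Type*} [Fintype α] [Fintype ι] {G : ι → Finset α}
    {grp : α → ι} (hG : ∀ x h, x ∈ G h ↔ grp x = h) {q : ℕ} (hq : ∀ h, #(G h) = q) :
    Fintype.card α = Fintype.card ι * q := by
  classical
  have huniv : univ = univ.biUnion G := by ext x; simp [hG]
  rw [← card_univ, huniv, card_biUnion fun _ _ _ _ hne => pairwise_disjoint_of_mem_iff hG hne]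
  simp [hq]

section ConstructionI

variable {α ι κ : Type*} [DecidableEq α] [Fintype ι]
  {G : ι → Finset α} {grp : α → ι} {P : ι → κ → Finset α}

/-- The block `B_{g,j} = (G_h \ {g}) ∪ (B_j \ P_{hj})` of Construction I, where `h = grp g` is
the index of the group containing `g` and `B_j = ⋃ h, P_{hj}`. -/
def constructionIBlock (G : ι → Finset α) (grp : α → ι) (P : ι → κ → Finset α) (g : α) (j : κ) :
    Finset α :=
  (G (grp g) \ {g}) ∪ ((univ.biUnion fun h => P h j) \ P (grp g) j)

theorem mem_constructionIBlock (hG : ∀ x h, x ∈ G h ↔ grp x = h) (hP : ∀ h j, P h j ⊆ G h)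
    {g x : α} {j : κ} :
    x ∈ constructionIBlock G grp P g j ↔
      (grp x = grp g ∧ x ≠ g) ∨ (grp x ≠ grp g ∧ x ∈ P (grp x) j) := by
  have hgrp : ∀ {h}, x ∈ P h j → grp x = h := fun hx => (hG _ _).1 (hP _ _ hx)
  simp only [constructionIBlock, mem_union, mem_sdiff, mem_singleton, mem_biUnion, mem_univ,
    true_and, hG]
  grind

theorem card_constructionIBlock (hG : ∀ x h, x ∈ G h ↔ grp x = h) (hP : ∀ h j, P h j ⊆ G h)
    {q k : ℕ} (hq : ∀ h, #(G h) = q) (hk : ∀ h j, #(P h j) = k) (g : α) (j : κ) :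
    #(constructionIBlock G grp P g j) = (q - 1) + (Fintype.card ι - 1) * k := by
  have hdisj := pairwise_disjoint_of_mem_iff hG
  have hunion : #(univ.biUnion fun h => P h j) = Fintype.card ι * k := by
    rw [card_biUnion fun h _ h' _ hne => (hdisj hne).mono (hP h j) (hP h' j)]
    simp [hk]
  have hparts : Disjoint (G (grp g) \ {g}) ((univ.biUnion fun h => P h j) \ P (grp g) j) := by
    refine disjoint_left.2 fun x hx hx' => ?_
    simp only [mem_sdiff, mem_biUnion, mem_univ, true_and, hG] at hx hx'
    obtain ⟨⟨h, hxh⟩, hxg⟩ := hx'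
    obtain rfl := (hG _ _).1 (hP _ _ hxh)
    exact hxg (hx.1 ▸ hxh)
  rw [constructionIBlock, card_union_of_disjoint hparts,
    card_sdiff_of_subset (singleton_subset_iff.2 ((hG _ _).2 rfl)),
    card_sdiff_of_subset (subset_biUnion_of_mem (P · j) (mem_univ _)), hunion, hq, hk,
    card_singleton, Nat.sub_one_mul]

variable [Fintype α] [Fintype κ]

theorem card_filter_mem_constructionIBlock (hG : ∀ x h, x ∈ G h ↔ grp x = h)
    (hP : ∀ h j, P h j ⊆ G h) {q : ℕ} (hq : ∀ h, #(G h) = q) (x : α) :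
    #{p : α × κ | x ∈ constructionIBlock G grp P p.1 p.2} =
      (q - 1) * Fintype.card κ + (Fintype.card ι - 1) * (q * #{j | x ∈ P (grp x) j}) := by
  classical
  have hfilter : ({p | x ∈ constructionIBlock G grp P p.1 p.2} : Finset (α × κ)) =
      (G (grp x)).erase x ×ˢ univ ∪ (G (grp x))ᶜ ×ˢ ({j | x ∈ P (grp x) j} : Finset κ) := by
    ext ⟨g, j⟩
    simp only [mem_filter, mem_constructionIBlock hG hP, mem_univ, true_and, mem_union,
      mem_product, mem_erase, mem_compl, hG, and_true]
    grind
  have hdisj : Disjoint ((G (grp x)).erase x ×ˢ (univ : Finset κ))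
      ((G (grp x))ᶜ ×ˢ ({j | x ∈ P (grp x) j} : Finset κ)) :=
    disjoint_product.2 (Or.inl (disjoint_compl_right.mono_left (erase_subset _ _)))
  rw [hfilter, card_union_of_disjoint hdisj, card_product, card_product,
    card_erase_of_mem ((hG _ _).2 rfl), card_compl, card_eq_mul_of_mem_iff hG hq, hq, card_univ,
    ← Nat.sub_one_mul, mul_assoc]

theorem constructionI_b_eq_one_tactical_configuration_general
    (hG : ∀ x h, x ∈ G h ↔ grp x = h) {q k : ℕ} {s : ι → ℕ}
    (hP : ∀ h, IsTacticalConfiguration (G h) (P h) q (Fintype.card κ) k (s h)) :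
    IsTacticalConfiguration univ (fun p : α × κ => constructionIBlock G grp P p.1 p.2)
      (Fintype.card ι * q) (Fintype.card ι * q * Fintype.card κ)
      ((q - 1) + (Fintype.card ι - 1) * k)
      (Fintype.card κ * ((q - 1) + (Fintype.card ι - 1) * k)) := by
  have hsub : ∀ h j, P h j ⊆ G h := fun h => (hP h).block_subset
  have hq : ∀ h, #(G h) = q := fun h => (hP h).card_points
  have hα : Fintype.card α = Fintype.card ι * q := card_eq_mul_of_mem_iff hG hq
  refine ⟨hα, by rw [Fintype.card_prod, hα], fun _ => subset_univ _, fun p =>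
    card_constructionIBlock hG hsub hq (fun h => (hP h).card_block) p.1 p.2, fun x _ => ?_⟩
  rw [card_filter_mem_constructionIBlock hG hsub hq,
    (hP _).card_filter_mem x ((hG _ _).2 rfl), (hP _).points_mul_replication]
  ring

end ConstructionI

/-- **Tactical configuration of Construction I with `b = 1`.**  The point set `P`
(the finite type `α`) is partitioned into `r` groups of size `q`; for each group
`G j`, `Pblk j 1, …, Pblk j q` are pairwise distinct `(q−1)`-element subsets of
`G j` (hence exactly the `q` such subsets), and `B_i = ⋃_j Pblk j i`.  Then the
indexed family of blocks `B_{g,j} = (G (grp g) \ {g}) ∪ (B_j \ Pblk (grp g) j)`,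
over the index pairs `(g, j)`, forms a tactical configuration on `P` with
parameters `(v̄, b̄, k̄, r̄) = (rq, rq², r(q−1), rq(q−1))`: there are `rq` points
and `rq²` index pairs, each block has `r(q−1)` elements, and each point lies in
exactly `rq(q−1)` of the blocks (counted with multiplicity over index pairs). -/
theorem constructionI_b_eq_one_tactical_configuration
    {α : Type} [Fintype α] [DecidableEq α]
    (r q : ℕ) (hr : 1 < r) (hq : 1 < q)
    (G : Fin r → Finset α)
    (hGdisj : ∀ i j : Fin r, i ≠ j → Disjoint (G i) (G j))
    (hGcard : ∀ i : Fin r, (G i).card = q)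
    (grp : α → Fin r) (hgrp : ∀ x : α, x ∈ G (grp x))
    (Pblk : Fin r → Fin q → Finset α)
    (hPsub : ∀ (j : Fin r) (i : Fin q), Pblk j i ⊆ G j)
    (hPcard : ∀ (j : Fin r) (i : Fin q), (Pblk j i).card = q - 1)
    (hPinj : ∀ j : Fin r, Function.Injective (Pblk j)) :
    Fintype.card α = r * q ∧
    Fintype.card (α × Fin q) = r * q * q ∧
    (∀ (g : α) (j : Fin q),
      ((G (grp g) \ {g}) ∪
        ((Finset.univ.biUnion fun h : Fin r => Pblk h j) \ Pblk (grp g) j)).card =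
        r * (q - 1)) ∧
    (∀ x : α,
      (Finset.univ.filter (fun p : α × Fin q =>
        x ∈ (G (grp p.1) \ {p.1}) ∪
          ((Finset.univ.biUnion fun h : Fin r => Pblk h p.2) \
            Pblk (grp p.1) p.2))).card = r * q * (q - 1)) := by
  have hgroup : ∀ h, IsTacticalConfiguration (G h) (Pblk h) q (Fintype.card (Fin q)) (q - 1)
      (q - 1) := fun h => isTacticalConfiguration_of_injective_card_sub_one hq (hGcard h)
    (Fintype.card_fin q) (hPsub h) (hPcard h) (hPinj h)
  have hconf := constructionI_b_eq_one_tactical_configuration_general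
    (mem_iff_of_disjoint hGdisj hgrp) hgroup
  have hk : (q - 1) + (r - 1) * (q - 1) = r * (q - 1) := by
    rw [← one_add_mul, Nat.add_sub_cancel' hr.le]
  simp only [Fintype.card_fin, hk] at hconf
  exact ⟨hconf.card_points, hconf.card_index, fun g j => hconf.card_block (g, j),
    fun x => (hconf.card_filter_mem x (mem_univ x)).trans (by ring)⟩
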